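/- Let 𝒯 be a rooted tree with n vertices. Then p[𝒯](x) = Σ_{𝒯_* ∈ ℱ(𝒯)} (−1)^{|L(𝒯_*)| + 1} x^{|𝒯_*|}, where the sum ranges over all faithful subtrees 𝒯_* of 𝒯, L(𝒯_*) denotes the set of leaves of 𝒯_* and |𝒯_*| its number of vertices. In particular, the degree of p[𝒯] equals n, and the coefficient of x^j in p[𝒯] vanishes for all j ≤ dist(root, L(𝒯)), the graph distance from the root to the nearest leaf of 𝒯. -/

import Mathlib

/-- A rooted tree: a finite tree with a distinguished root vertex, given by the (ordered)
list of subtrees rooted at the children of the root. -/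
inductive RTree : Type where
  | node : List RTree → RTree

namespace RTree

mutual
/-- The tree polynomial `p[𝒯] ∈ ℤ[x]`: `p = x` for a single vertex, and
`p[𝒯] = x (1 − ∏ᵢ (1 − p[𝒯ᵢ]))` when the subtrees rooted at the children of the root are
`𝒯₁, …, 𝒯ᵣ`. -/
noncomputable def treePoly : RTree → Polynomial ℤ
  | .node [] => Polynomial.X
  | .node (t :: ts) => Polynomial.X * (1 - prodPoly (t :: ts))
  termination_by t => sizeOf t

/-- `∏ᵢ (1 − p[𝒯ᵢ])` over a list of trees. -/
noncomputable def prodPoly : List RTree → Polynomial ℤ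
  | [] => 1
  | t :: ts => (1 - treePoly t) * prodPoly ts
  termination_by l => sizeOf l
end

mutual
/-- The set of vertex addresses of a rooted tree: a vertex is addressed by the list of
child indices on the path from the root to it (so the root has address `[]`). -/
def vertexFinset : RTree → Finset (List ℕ)
  | .node ts => insert [] (childVerts ts 0)
  termination_by t => sizeOf t

def childVerts : List RTree → ℕ → Finset (List ℕ)
  | [], _ => ∅
  | t :: ts, i => (vertexFinset t).image (List.cons i) ∪ childVerts ts (i + 1)
  termination_by l _ => sizeOf l
end

mutual
/-- The subtree rooted at a given vertex address, if the address is valid. -/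
def subtreeAt : RTree → List ℕ → Option RTree
  | t, [] => some t
  | .node ts, i :: l => subtreeAtAux ts i l
  termination_by t _ => sizeOf t

def subtreeAtAux : List RTree → ℕ → List ℕ → Option RTree
  | [], _, _ => none
  | t :: _, 0, l => subtreeAt t l
  | _ :: ts, i + 1, l => subtreeAtAux ts i l
  termination_by l _ _ => sizeOf l
end

/-- Whether a tree consists of a single vertex (i.e. its root is a leaf). -/
def isLeafTree : RTree → Bool
  | .node [] => true
  | .node (_ :: _) => false

/-- The set of (addresses of) leaves of a rooted tree: vertices with no children. -/
def leafFinset (t : RTree) : Finset (List ℕ) :=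
  (vertexFinset t).filter (fun l => (subtreeAt t l).any isLeafTree = true)

/-- The set of all prefixes of an address: the set of vertices of the path from the root
to the vertex with this address. -/
def prefixFinset (l : List ℕ) : Finset (List ℕ) :=
  (Finset.range (l.length + 1)).image (fun k => l.take k)

end RTree

namespace RTree

/-- A (vertex set of a) faithful subtree of `t`: a nonempty union of vertex sets of
root-to-leaf paths of `t`. -/
def Faithful (t : RTree) (F : Finset (List ℕ)) : Prop :=
  ∃ Ls : Finset (List ℕ), Ls.Nonempty ∧ Ls ⊆ leafFinset t ∧ F = Ls.biUnion prefixFinset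

open scoped Classical in
/-- The leaves of a subtree given by its vertex set `F`: the vertices of `F` having no
child (i.e. no one-step extension) inside `F`. -/
noncomputable def subtreeLeaves (F : Finset (List ℕ)) : Finset (List ℕ) :=
  F.filter (fun v => ∀ w ∈ F, ∀ i : ℕ, w ≠ v ++ [i])

end RTree

/-!
A faithful subtree is the union of the root paths to its leaves. Since distinct leaves of `𝒯` are
incomparable, faithful subtrees correspond bijectively to nonempty sets `L` of leaves of `𝒯`, so
the claimed expansion says that `1 - p[𝒯]` is the sum of `(-1)^|L| x^m(L)` over all sets `L` of
leaves, where `m(L)` counts the vertices on the root paths to `L`. When the root is not counted,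
this weight is multiplicative over the branches at the root, which turns the sum into the product
in the recursion for `p[𝒯]`. The degree and the vanishing coefficients are read off from the
expansion: `𝒯` is its only faithful subtree with `n` vertices, and every faithful subtree contains
a whole root-to-leaf path.
-/

section Powerset

variable {α β M : Type*} [DecidableEq α] [AddCommMonoid M]

theorem sum_powerset_union_of_disjoint {s t : Finset α} (h : Disjoint s t) (f : Finset α → M) :
    ∑ u ∈ (s ∪ t).powerset, f u = ∑ a ∈ s.powerset, ∑ b ∈ t.powerset, f (a ∪ b) := by
  induction s using Finset.induction_on generalizing f with
  | empty => simp
  | insert x s hx ih =>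
    rw [Finset.disjoint_insert_left] at h
    have hxst : x ∉ s ∪ t := by simp [hx, h.1]
    simp only [Finset.insert_union, Finset.sum_powerset_insert hxst,
      Finset.sum_powerset_insert hx, ih h.2]

theorem sum_powerset_image_of_injective {g : β → α} (hg : g.Injective) (s : Finset β)
    (f : Finset α → M) :
    ∑ u ∈ (s.image g).powerset, f u = ∑ a ∈ s.powerset, f (a.image g) := by
  rw [Finset.powerset_image, Finset.sum_image (Finset.image_injective hg).injOn]

end Powerset

namespace RTree

@[elab_as_elim]
theorem induction_on_children {P : RTree → Prop}
    (node : ∀ ts, (∀ t ∈ ts, P t) → P (.node ts)) : ∀ t, P t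
  | .node ts => node ts fun t _ => induction_on_children node t
  termination_by t => sizeOf t
  decreasing_by
    have := List.sizeOf_lt_of_mem ‹t ∈ ts›
    simp only [RTree.node.sizeOf_spec]
    omega

/-! ### Addresses of vertices and leaves -/

/-- The addresses obtained by placing given sets of addresses below consecutive children of a
root, the first of them below child number `i`. -/
def graft : List (Finset (List ℕ)) → ℕ → Finset (List ℕ)
  | [], _ => ∅
  | S :: Ss, i => S.image (List.cons i) ∪ graft Ss (i + 1)

@[simp]
theorem nil_notMem_graft (Ss : List (Finset (List ℕ))) (i : ℕ) : [] ∉ graft Ss i := by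
  induction Ss generalizing i with
  | nil => simp [graft]
  | cons S Ss ih => simp [graft, ih]

@[simp]
theorem cons_mem_graft {Ss : List (Finset (List ℕ))} {i j : ℕ} {v : List ℕ} :
    j :: v ∈ graft Ss i ↔ i ≤ j ∧ ∃ S, Ss[j - i]? = some S ∧ v ∈ S := by
  induction Ss generalizing i with
  | nil => simp [graft]
  | cons S Ss ih =>
    simp only [graft, Finset.mem_union, Finset.mem_image, List.cons.injEq, ih]
    rcases lt_trichotomy j i with hj | rfl | hj
    · simp [hj.not_ge, hj.ne', (hj.trans i.lt_succ_self).not_ge]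
    · simp
    · obtain ⟨k, rfl⟩ := Nat.exists_eq_add_of_lt hj
      simp [add_assoc, Nat.add_sub_add_left]

theorem childVerts_eq_graft (ts : List RTree) (i : ℕ) :
    childVerts ts i = graft (ts.map vertexFinset) i := by
  induction ts generalizing i with
  | nil => simp [childVerts, graft]
  | cons t ts ih => simp [childVerts, graft, ih]

@[simp]
theorem nil_mem_vertexFinset (t : RTree) : [] ∈ vertexFinset t := by
  cases t
  simp [vertexFinset]

@[simp]
theorem cons_mem_vertexFinset {ts : List RTree} {k : ℕ} {v : List ℕ} :
    k :: v ∈ vertexFinset (.node ts) ↔ ∃ t, ts[k]? = some t ∧ v ∈ vertexFinset t := by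
  simp [vertexFinset, childVerts_eq_graft]

theorem subtreeAtAux_eq_bind (ts : List RTree) (k : ℕ) (v : List ℕ) :
    subtreeAtAux ts k v = ts[k]?.bind (subtreeAt · v) := by
  induction ts generalizing k with
  | nil => simp [subtreeAtAux]
  | cons t ts ih => cases k <;> simp [subtreeAtAux, ih]

@[simp]
theorem nil_mem_leafFinset {ts : List RTree} : [] ∈ leafFinset (.node ts) ↔ ts = [] := by
  cases ts <;> simp [leafFinset, subtreeAt, isLeafTree]

@[simp]
theorem cons_mem_leafFinset {ts : List RTree} {k : ℕ} {v : List ℕ} :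
    k :: v ∈ leafFinset (.node ts) ↔ ∃ t, ts[k]? = some t ∧ v ∈ leafFinset t := by
  simp only [leafFinset, Finset.mem_filter, cons_mem_vertexFinset, subtreeAt,
    subtreeAtAux_eq_bind]
  cases ts[k]? <;> simp

theorem leafFinset_node_nil : leafFinset (.node []) = {[]} := by
  ext v
  cases v <;> simp

theorem leafFinset_node_of_ne_nil {ts : List RTree} (h : ts ≠ []) :
    leafFinset (.node ts) = graft (ts.map leafFinset) 0 := by
  ext v
  cases v <;> simp [h]

theorem leafFinset_subset_vertexFinset (t : RTree) : leafFinset t ⊆ vertexFinset t :=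
  Finset.filter_subset _ _

theorem mem_vertexFinset_of_prefix {t : RTree} {v w : List ℕ} (hvw : v <+: w)
    (hw : w ∈ vertexFinset t) : v ∈ vertexFinset t := by
  induction w generalizing t v with
  | nil => simp [List.prefix_nil.mp hvw]
  | cons k w ih =>
    obtain ⟨ts⟩ := t
    obtain rfl | ⟨v', rfl, hvw'⟩ := List.prefix_cons_iff.mp hvw
    · simp
    · obtain ⟨t, ht, hw⟩ := cons_mem_vertexFinset.mp hw
      exact cons_mem_vertexFinset.mpr ⟨t, ht, ih hvw' hw⟩

theorem eq_of_mem_leafFinset_of_prefix {t : RTree} {v w : List ℕ} (hv : v ∈ leafFinset t)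
    (hw : w ∈ vertexFinset t) (hvw : v <+: w) : v = w := by
  induction v generalizing t w with
  | nil =>
    obtain ⟨ts⟩ := t
    obtain rfl := nil_mem_leafFinset.mp hv
    cases w <;> simp_all
  | cons k v ih =>
    obtain ⟨ts⟩ := t
    obtain ⟨k', w, rfl⟩ := List.exists_cons_of_ne_nil (hvw.ne_nil (List.cons_ne_nil k v))
    obtain ⟨rfl, hvw'⟩ := List.cons_prefix_cons.mp hvw
    obtain ⟨t, ht, hv⟩ := cons_mem_leafFinset.mp hv
    obtain ⟨t', ht', hw⟩ := cons_mem_vertexFinset.mp hw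
    obtain rfl : t = t' := Option.some.inj (ht.symm.trans ht')
    rw [ih hv hw hvw']

theorem isAntichain_leafFinset (t : RTree) :
    IsAntichain (· <+: ·) (leafFinset t : Set (List ℕ)) := fun _ hv _ hw hne hvw =>
  hne (eq_of_mem_leafFinset_of_prefix hv (leafFinset_subset_vertexFinset t hw) hvw)

theorem exists_mem_leafFinset_prefix {t : RTree} {v : List ℕ} (hv : v ∈ vertexFinset t) :
    ∃ l ∈ leafFinset t, v <+: l := by
  induction t using induction_on_children generalizing v with
  | node ts ih =>
    cases v with
    | nil =>
      cases ts with
      | nil => exact ⟨[], by simp⟩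
      | cons t ts =>
        obtain ⟨l, hl, -⟩ := ih t (by simp) (nil_mem_vertexFinset t)
        exact ⟨0 :: l, by simpa using hl, List.nil_prefix⟩
    | cons k v =>
      obtain ⟨t, ht, hv⟩ := cons_mem_vertexFinset.mp hv
      obtain ⟨l, hl, hvl⟩ := ih t (List.mem_of_getElem? ht) hv
      exact ⟨k :: l, cons_mem_leafFinset.mpr ⟨t, ht, hl⟩,
        List.cons_prefix_cons.mpr ⟨rfl, hvl⟩⟩

/-! ### Unions of root paths -/

/-- The union of the vertex sets of the paths from the root to the addresses in `L`. -/
def pathUnion (L : Finset (List ℕ)) : Finset (List ℕ) :=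
  L.biUnion prefixFinset

theorem mem_prefixFinset {v l : List ℕ} : v ∈ prefixFinset l ↔ v <+: l := by
  simp only [prefixFinset, Finset.mem_image, Finset.mem_range]
  constructor
  · rintro ⟨k, -, rfl⟩
    exact List.take_prefix k l
  · intro h
    exact ⟨v.length, Nat.lt_succ_of_le h.length_le, (List.prefix_iff_eq_take.mp h).symm⟩

theorem card_prefixFinset (l : List ℕ) : (prefixFinset l).card = l.length + 1 := by
  rw [prefixFinset, Finset.card_image_of_injOn, Finset.card_range]
  intro a ha b hb hab
  have := congrArg List.length hab
  simp only [Finset.coe_range, Set.mem_Iio, List.length_take] at ha hb this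
  omega

theorem mem_pathUnion {L : Finset (List ℕ)} {v : List ℕ} :
    v ∈ pathUnion L ↔ ∃ l ∈ L, v <+: l := by
  simp only [pathUnion, Finset.mem_biUnion, mem_prefixFinset]

theorem nil_mem_pathUnion {L : Finset (List ℕ)} : [] ∈ pathUnion L ↔ L.Nonempty := by
  simp [mem_pathUnion, Finset.Nonempty]

theorem erase_nil_pathUnion_image_cons (i : ℕ) (A : Finset (List ℕ)) :
    (pathUnion (A.image (List.cons i))).erase [] = (pathUnion A).image (List.cons i) := by
  ext v
  cases v with
  | nil => simp
  | cons j v => obtain rfl | hij := eq_or_ne i j <;> simp [mem_pathUnion, *, eq_comm]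

theorem mem_subtreeLeaves {F : Finset (List ℕ)} {v : List ℕ} :
    v ∈ subtreeLeaves F ↔ v ∈ F ∧ ∀ i : ℕ, v ++ [i] ∉ F := by
  simp only [subtreeLeaves, Finset.mem_filter]
  grind

theorem subtreeLeaves_pathUnion {L : Finset (List ℕ)}
    (hL : IsAntichain (· <+: ·) (L : Set (List ℕ))) : subtreeLeaves (pathUnion L) = L := by
  ext v
  rw [mem_subtreeLeaves, mem_pathUnion]
  constructor
  · rintro ⟨⟨l, hl, u, rfl⟩, hv⟩
    cases u with
    | nil => simpa using hl
    | cons i u => exact absurd (mem_pathUnion.mpr ⟨_, hl, by simp⟩) (hv i)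
  · refine fun hv => ⟨⟨v, hv, List.prefix_rfl⟩, fun i hi => ?_⟩
    obtain ⟨l, hl, hvl⟩ := mem_pathUnion.mp hi
    obtain rfl := hL.eq hv hl ((List.prefix_append v [i]).trans hvl)
    simpa using hvl.length_le

theorem pathUnion_leafFinset (t : RTree) : pathUnion (leafFinset t) = vertexFinset t := by
  ext v
  rw [mem_pathUnion]
  exact ⟨fun ⟨_, hl, hvl⟩ => mem_vertexFinset_of_prefix hvl (leafFinset_subset_vertexFinset t hl),
    exists_mem_leafFinset_prefix⟩

/-! ### Faithful subtrees -/

open scoped Classical in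
/-- The family `ℱ(𝒯)` of faithful subtrees of `𝒯`, encoded by their vertex sets. -/
noncomputable def faithfulSubtrees (t : RTree) : Finset (Finset (List ℕ)) :=
  (vertexFinset t).powerset.filter (Faithful t)

theorem Faithful.subset_vertexFinset {t : RTree} {F : Finset (List ℕ)} (h : Faithful t F) :
    F ⊆ vertexFinset t := by
  obtain ⟨L, -, hL, rfl⟩ := h
  rw [← pathUnion_leafFinset]
  exact Finset.biUnion_subset_biUnion_of_subset_left _ hL

theorem mem_faithfulSubtrees {t : RTree} {F : Finset (List ℕ)} :
    F ∈ faithfulSubtrees t ↔ Faithful t F := by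
  simp only [faithfulSubtrees, Finset.mem_filter, Finset.mem_powerset, and_iff_right_iff_imp]
  exact Faithful.subset_vertexFinset

theorem faithful_vertexFinset (t : RTree) : Faithful t (vertexFinset t) :=
  ⟨leafFinset t, nil_mem_pathUnion.mp (by simp [pathUnion_leafFinset]), Finset.Subset.rfl,
    (pathUnion_leafFinset t).symm⟩

theorem Faithful.length_lt_card {t : RTree} {F : Finset (List ℕ)} (h : Faithful t F) :
    ∃ l ∈ leafFinset t, l.length < F.card := by
  obtain ⟨L, ⟨l, hl⟩, hL, rfl⟩ := h
  refine ⟨l, hL hl, ?_⟩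
  rw [Nat.lt_iff_add_one_le, ← card_prefixFinset]
  exact Finset.card_le_card (Finset.subset_biUnion_of_mem prefixFinset hl)

theorem faithfulSubtrees_eq_image (t : RTree) :
    faithfulSubtrees t = ((leafFinset t).powerset.erase ∅).image pathUnion := by
  ext F
  simp only [mem_faithfulSubtrees, Faithful, Finset.mem_image, Finset.mem_erase,
    Finset.mem_powerset, ← Finset.nonempty_iff_ne_empty, and_assoc, pathUnion, eq_comm]

theorem sum_faithfulSubtrees {M : Type*} [AddCommMonoid M] (t : RTree)
    (f : ℕ → Finset (List ℕ) → M) :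
    ∑ F ∈ faithfulSubtrees t, f (subtreeLeaves F).card F =
      ∑ L ∈ (leafFinset t).powerset.erase ∅, f L.card (pathUnion L) := by
  have leaves_eq : ∀ L ∈ (leafFinset t).powerset.erase ∅, subtreeLeaves (pathUnion L) = L :=
    fun L hL => subtreeLeaves_pathUnion <| (isAntichain_leafFinset t).subset <|
      Finset.coe_subset.mpr <| Finset.mem_powerset.mp <| Finset.mem_of_mem_erase hL
  rw [faithfulSubtrees_eq_image, Finset.sum_image (Set.LeftInvOn.injOn leaves_eq)]
  exact Finset.sum_congr rfl fun L hL => by rw [leaves_eq L hL]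

/-! ### Signed sums over sets of leaves -/

section Weight

variable {R : Type*} [CommRing R] (x : R)

/-- The signed weight `(-1)^|L| x^m`, where `m` is the number of vertices of the subtree spanned
by the root paths to `L`. -/
def weight (L : Finset (List ℕ)) : R :=
  (-1) ^ L.card * x ^ (pathUnion L).card

/-- The variant of `weight` in which the root is not counted as a vertex; it is multiplicative
over the branches at the root. -/
def properWeight (L : Finset (List ℕ)) : R :=
  (-1) ^ L.card * x ^ ((pathUnion L).erase []).card

@[simp]
theorem weight_empty : weight x ∅ = 1 := by
  simp [weight, pathUnion]

@[simp]
theorem properWeight_empty : properWeight x ∅ = 1 := by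
  simp [properWeight, pathUnion]

theorem weight_eq_mul_properWeight {L : Finset (List ℕ)} (hL : L.Nonempty) :
    weight x L = x * properWeight x L := by
  rw [weight, properWeight, ← Finset.card_erase_add_one (nil_mem_pathUnion.mpr hL)]
  ring

theorem sum_powerset_weight (L : Finset (List ℕ)) :
    ∑ A ∈ L.powerset, weight x A = 1 - x * (1 - ∑ A ∈ L.powerset, properWeight x A) := by
  have sum_nonempty : ∑ A ∈ L.powerset.erase ∅, weight x A =
      x * ∑ A ∈ L.powerset.erase ∅, properWeight x A := by
    rw [Finset.mul_sum]
    exact Finset.sum_congr rfl fun A hA => weight_eq_mul_properWeight x <|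
      Finset.nonempty_iff_ne_empty.mpr <| Finset.ne_of_mem_erase hA
  rw [← Finset.add_sum_erase _ _ (Finset.empty_mem_powerset L),
    ← Finset.add_sum_erase _ (properWeight x) (Finset.empty_mem_powerset L), sum_nonempty,
    weight_empty, properWeight_empty]
  ring

theorem properWeight_image_cons_union {i : ℕ} (A : Finset (List ℕ)) {B : Finset (List ℕ)}
    (hB : ∀ l, i :: l ∉ B) :
    properWeight x (A.image (List.cons i) ∪ B) = weight x A * properWeight x B := by
  have disjoint_addresses : Disjoint (A.image (List.cons i)) B := by
    simpa [Finset.disjoint_left] using fun l _ => hB l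
  have disjoint_paths :
      Disjoint ((pathUnion A).image (List.cons i)) ((pathUnion B).erase []) := by
    simp only [Finset.disjoint_left, Finset.mem_image, Finset.mem_erase, mem_pathUnion]
    rintro _ ⟨v, -, rfl⟩ ⟨-, _, hl, u, rfl⟩
    exact hB _ hl
  have card_paths : ((pathUnion (A.image (List.cons i) ∪ B)).erase []).card =
      (pathUnion A).card + ((pathUnion B).erase []).card := by
    rw [pathUnion, Finset.union_biUnion, ← pathUnion, ← pathUnion, Finset.erase_union_distrib,
      erase_nil_pathUnion_image_cons, Finset.card_union_of_disjoint disjoint_paths,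
      Finset.card_image_of_injective _ List.cons_injective]
  rw [properWeight, weight, properWeight, card_paths,
    Finset.card_union_of_disjoint disjoint_addresses,
    Finset.card_image_of_injective _ List.cons_injective]
  ring

theorem sum_powerset_graft_properWeight (Ss : List (Finset (List ℕ))) (i : ℕ) :
    ∑ L ∈ (graft Ss i).powerset, properWeight x L =
      (Ss.map fun S => ∑ A ∈ S.powerset, weight x A).prod := by
  induction Ss generalizing i with
  | nil => simp [graft]
  | cons S Ss ih =>
    have cons_notMem : ∀ l, i :: l ∉ graft Ss (i + 1) := by simp
    have disjoint_branches : Disjoint (S.image (List.cons i)) (graft Ss (i + 1)) := by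
      simp [Finset.disjoint_left]
    rw [graft, sum_powerset_union_of_disjoint disjoint_branches,
      sum_powerset_image_of_injective List.cons_injective, List.map_cons, List.prod_cons,
      ← ih (i + 1), Finset.sum_mul_sum]
    refine Finset.sum_congr rfl fun A _ => Finset.sum_congr rfl fun B hB => ?_
    exact properWeight_image_cons_union x A fun l hl =>
      cons_notMem l (Finset.mem_powerset.mp hB hl)

end Weight

/-! ### The tree polynomial -/

theorem prodPoly_eq_prod_map (ts : List RTree) :
    prodPoly ts = (ts.map fun t => 1 - treePoly t).prod := by
  induction ts with
  | nil => simp [prodPoly]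
  | cons t ts ih => simp [prodPoly, ih]

theorem treePoly_node_of_ne_nil {ts : List RTree} (h : ts ≠ []) :
    treePoly (.node ts) = Polynomial.X * (1 - prodPoly ts) := by
  obtain ⟨t, ts, rfl⟩ := List.exists_cons_of_ne_nil h
  rw [treePoly]

theorem sum_powerset_leafFinset_weight (t : RTree) :
    ∑ L ∈ (leafFinset t).powerset, weight Polynomial.X L = 1 - treePoly t := by
  induction t using induction_on_children with
  | node ts ih =>
    rcases eq_or_ne ts [] with rfl | hts
    · have weight_root : weight Polynomial.X {[]} = -(Polynomial.X : Polynomial ℤ) := by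
        simp [weight, pathUnion, card_prefixFinset]
      rw [leafFinset_node_nil, ← insert_empty_eq,
        Finset.sum_powerset_insert (Finset.notMem_empty _)]
      simp [weight_root, treePoly, sub_eq_add_neg]
    · rw [sum_powerset_weight, leafFinset_node_of_ne_nil hts, sum_powerset_graft_properWeight,
        List.map_map, treePoly_node_of_ne_nil hts, prodPoly_eq_prod_map]
      congr 4
      exact List.map_congr_left ih

theorem treePoly_eq_sum_faithfulSubtrees (t : RTree) :
    treePoly t = ∑ F ∈ faithfulSubtrees t,
      (-1) ^ ((subtreeLeaves F).card + 1) * Polynomial.X ^ F.card := by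
  have h := sum_powerset_leafFinset_weight t
  rw [← Finset.add_sum_erase _ _ (Finset.empty_mem_powerset _), weight_empty] at h
  calc treePoly t
      = ∑ L ∈ (leafFinset t).powerset.erase ∅, -weight Polynomial.X L := by
        rw [Finset.sum_neg_distrib]
        linear_combination h
    _ = ∑ L ∈ (leafFinset t).powerset.erase ∅,
          (-1) ^ (L.card + 1) * Polynomial.X ^ (pathUnion L).card :=
        Finset.sum_congr rfl fun L _ => by rw [weight]; ring
    _ = _ := (sum_faithfulSubtrees t fun k F => (-1) ^ (k + 1) * Polynomial.X ^ F.card).symm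

theorem coeff_treePoly (t : RTree) (j : ℕ) :
    (treePoly t).coeff j =
      ∑ F ∈ faithfulSubtrees t with F.card = j, (-1) ^ ((subtreeLeaves F).card + 1) := by
  rw [treePoly_eq_sum_faithfulSubtrees, Polynomial.finsetSum_coeff, Finset.sum_filter]
  refine Finset.sum_congr rfl fun F _ => ?_
  rw [← Polynomial.C_1, ← Polynomial.C_neg, ← Polynomial.C_pow, Polynomial.coeff_C_mul_X_pow]
  simp only [eq_comm]

theorem coeff_treePoly_eq_zero {t : RTree} {j : ℕ} (h : ∀ F, Faithful t F → F.card ≠ j) :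
    (treePoly t).coeff j = 0 := by
  rw [coeff_treePoly, Finset.filter_false_of_mem, Finset.sum_empty]
  exact fun F hF => h F (mem_faithfulSubtrees.mp hF)

theorem filter_faithfulSubtrees_card_eq (t : RTree) :
    {F ∈ faithfulSubtrees t | F.card = (vertexFinset t).card} = {vertexFinset t} := by
  ext F
  simp only [Finset.mem_filter, mem_faithfulSubtrees, Finset.mem_singleton]
  constructor
  · rintro ⟨hF, hcard⟩
    exact Finset.eq_of_subset_of_card_le hF.subset_vertexFinset hcard.ge
  · rintro rfl
    exact ⟨faithful_vertexFinset t, rfl⟩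

theorem natDegree_treePoly (t : RTree) : (treePoly t).natDegree = (vertexFinset t).card := by
  apply Polynomial.natDegree_eq_of_le_of_coeff_ne_zero
  · rw [Polynomial.natDegree_le_iff_coeff_eq_zero]
    exact fun j hj => coeff_treePoly_eq_zero fun F hF =>
      ((Finset.card_le_card hF.subset_vertexFinset).trans_lt hj).ne
  · rw [coeff_treePoly, filter_faithfulSubtrees_card_eq, Finset.sum_singleton]
    exact pow_ne_zero _ (by norm_num)

theorem coeff_treePoly_eq_zero_of_le_length {t : RTree} {j : ℕ}
    (hj : ∀ l ∈ leafFinset t, j ≤ l.length) : (treePoly t).coeff j = 0 := by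
  refine coeff_treePoly_eq_zero fun F hF => ?_
  obtain ⟨l, hl, hlF⟩ := hF.length_lt_card
  exact ((hj l hl).trans_lt hlF).ne'

end RTree

open scoped Classical in
/-- For a rooted tree `𝒯` on `n` vertices,
`p[𝒯](x) = Σ_{𝒯_* faithful} (−1)^{|L(𝒯_*)|+1} x^{|𝒯_*|}`; in particular `deg p[𝒯] = n`
and the coefficient of `x^j` vanishes for all `j ≤ dist(root, L(𝒯))` (equivalently, for
all `j` not exceeding the length of every root-to-leaf path). -/
theorem stmt8 (t : RTree) :
    RTree.treePoly t
        = ∑ F ∈ (RTree.vertexFinset t).powerset.filter (RTree.Faithful t),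
            (-1 : Polynomial ℤ) ^ ((RTree.subtreeLeaves F).card + 1) * Polynomial.X ^ F.card ∧
    (RTree.treePoly t).natDegree = (RTree.vertexFinset t).card ∧
    ∀ j : ℕ, (∀ ℓ ∈ RTree.leafFinset t, j ≤ ℓ.length) → (RTree.treePoly t).coeff j = 0 := by
  exact ⟨RTree.treePoly_eq_sum_faithfulSubtrees t, RTree.natDegree_treePoly t,
    fun _ => RTree.coeff_treePoly_eq_zero_of_le_length⟩
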